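/- Let N ≥ 2 be a natural number, let t > 0, and let E₁ ≤ E₂ ≤ ⋯ ≤ E_N be reals with E₁ < E_N and 0 ≤ E_j·t ≤ π/2 for every j. Let p₁, …, p_N be nonnegative reals with Σ_j p_j = 1, and let ⟨E⟩ be a real number with Σ_j p_j·E_j ≤ ⟨E⟩. Then Σ_j p_j·cos²(E_j·t/2) ≥ cos²(E₁·t/2)·(1 − x) + cos²(E_N·t/2)·x, where x = (⟨E⟩ − E₁)/(E_N − E₁). -/

import Mathlib

open Real

/-!
A concave function lies above its chord on `[a, b]`, so averaging against the weights bounds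
`∑ i, w i * f (x i)` below by the chord evaluated at the mean `∑ i, w i * x i`. When `f b ≤ f a`
the chord is decreasing, and the mean may be replaced by any upper bound for it. The theorem is
the case of `cos (x * t / 2) ^ 2 = (1 + cos (x * t)) / 2`, which is concave where `|x * t| ≤ π / 2`.
-/

section Chord

variable {𝕜 ι : Type*} [Field 𝕜]

/-- The chord of `f` over `[a, b]`, evaluated at `x`: the affine function through `(a, f a)` and
`(b, f b)`. It is the constant `f a` when `a = b`, because `x / 0 = 0`. -/
def chord (f : 𝕜 → 𝕜) (a b x : 𝕜) : 𝕜 :=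
  f a * (1 - (x - a) / (b - a)) + f b * ((x - a) / (b - a))

theorem chord_eq_add_mul (f : 𝕜 → 𝕜) (a b x : 𝕜) :
    chord f a b x = f a + (f b - f a) / (b - a) * (x - a) := by
  unfold chord
  ring

theorem sum_mul_chord {s : Finset ι} {w : ι → 𝕜} (hw : ∑ i ∈ s, w i = 1)
    (f : 𝕜 → 𝕜) (a b : 𝕜) (x : ι → 𝕜) :
    ∑ i ∈ s, w i * chord f a b (x i) = chord f a b (∑ i ∈ s, w i * x i) := by
  simp only [chord_eq_add_mul, mul_add, mul_sub, Finset.sum_add_distrib, Finset.sum_sub_distrib,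
    mul_left_comm (w _), ← Finset.mul_sum, ← Finset.sum_mul, hw, one_mul]

variable [LinearOrder 𝕜] [IsStrictOrderedRing 𝕜] {f : 𝕜 → 𝕜} {a b : 𝕜}

theorem antitone_chord (hab : a ≤ b) (hf : f b ≤ f a) : Antitone (chord f a b) := by
  have slope_nonpos : (f b - f a) / (b - a) ≤ 0 :=
    div_nonpos_of_nonpos_of_nonneg (sub_nonpos.2 hf) (sub_nonneg.2 hab)
  intro x y hxy
  simp only [chord_eq_add_mul]
  gcongr f a + ?_
  exact mul_le_mul_of_nonpos_left (sub_le_sub_right hxy a) slope_nonpos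

theorem chord_le_of_concaveOn (hf : ConcaveOn 𝕜 (Set.Icc a b) f) (hab : a < b) {x : 𝕜}
    (hx : x ∈ Set.Icc a b) : chord f a b x ≤ f x := by
  have hd : 0 < b - a := sub_pos.2 hab
  have weight_nonneg : 0 ≤ (x - a) / (b - a) := div_nonneg (sub_nonneg.2 hx.1) hd.le
  have weight_le_one : (x - a) / (b - a) ≤ 1 := (div_le_one hd).2 (sub_le_sub_right hx.2 a)
  have x_eq : (1 - (x - a) / (b - a)) * a + (x - a) / (b - a) * b = x := by
    field_simp
    ring
  have concavity := hf.2 (Set.left_mem_Icc.2 hab.le) (Set.right_mem_Icc.2 hab.le)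
    (sub_nonneg.2 weight_le_one) weight_nonneg (sub_add_cancel _ _)
  simp only [smul_eq_mul, x_eq] at concavity
  simpa only [chord, mul_comm] using concavity

theorem chord_le_sum_mul_of_concaveOn (hf : ConcaveOn 𝕜 (Set.Icc a b) f) (hab : a < b)
    (hfab : f b ≤ f a) {s : Finset ι} {w x : ι → 𝕜} (hw₀ : ∀ i ∈ s, 0 ≤ w i)
    (hw₁ : ∑ i ∈ s, w i = 1) (hx : ∀ i ∈ s, x i ∈ Set.Icc a b) {m : 𝕜}
    (hm : ∑ i ∈ s, w i * x i ≤ m) :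
    chord f a b m ≤ ∑ i ∈ s, w i * f (x i) :=
  calc chord f a b m
      ≤ chord f a b (∑ i ∈ s, w i * x i) := antitone_chord hab.le hfab hm
    _ = ∑ i ∈ s, w i * chord f a b (x i) := (sum_mul_chord hw₁ f a b x).symm
    _ ≤ ∑ i ∈ s, w i * f (x i) := Finset.sum_le_sum fun i hi =>
        mul_le_mul_of_nonneg_left (chord_le_of_concaveOn hf hab (hx i hi)) (hw₀ i hi)

end Chord

theorem cos_half_sq (x : ℝ) : cos (x / 2) ^ 2 = 1 / 2 + cos x / 2 := by
  rw [cos_sq, mul_div_cancel₀ x two_ne_zero]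

theorem concaveOn_cos_half_sq :
    ConcaveOn ℝ (Set.Icc (-(π / 2)) (π / 2)) fun x => cos (x / 2) ^ 2 := by
  have concave_half_cos := strictConcaveOn_cos_Icc.concaveOn.smul (c := (1 / 2 : ℝ)) (by norm_num)
  refine (concave_half_cos.add_const (1 / 2)).congr fun x _ => ?_
  simp only [Pi.add_apply, smul_eq_mul, cos_half_sq]
  ring

theorem concaveOn_cos_mul_half_sq {b t : ℝ} (hbt : |b * t| ≤ π / 2) :
    ConcaveOn ℝ (Set.Icc (-b) b) fun x => cos (x * t / 2) ^ 2 := by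
  refine (concaveOn_cos_half_sq.comp_linearMap (LinearMap.mulRight ℝ t)).subset
    (fun x hx => abs_le.1 (le_trans ?_ hbt)) (convex_Icc _ _)
  simp only [LinearMap.mulRight_apply, abs_mul]
  exact mul_le_mul_of_nonneg_right ((abs_le.2 hx).trans (le_abs_self b)) (abs_nonneg t)

theorem cos_half_sq_le_of_abs_le {x y : ℝ} (hxy : |x| ≤ |y|) (hy : |y| ≤ π) :
    cos (y / 2) ^ 2 ≤ cos (x / 2) ^ 2 := by
  rw [cos_half_sq, cos_half_sq, ← cos_abs x, ← cos_abs y]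
  gcongr
  exact cos_le_cos_of_nonneg_of_le_pi (abs_nonneg x) hy hxy

theorem stmt3_general {ι : Type*} {s : Finset ι} {a b t : ℝ} (hab : a < b) (hb : |a| ≤ b)
    (hbt : |b * t| ≤ π / 2) {E p : ι → ℝ} (hE : ∀ j ∈ s, E j ∈ Set.Icc a b)
    (hp : ∀ j ∈ s, 0 ≤ p j) (hsum : ∑ j ∈ s, p j = 1) {Eavg : ℝ}
    (hmean : ∑ j ∈ s, p j * E j ≤ Eavg) :
    cos (a * t / 2) ^ 2 * (1 - (Eavg - a) / (b - a)) +
      cos (b * t / 2) ^ 2 * ((Eavg - a) / (b - a)) ≤ ∑ j ∈ s, p j * cos (E j * t / 2) ^ 2 := by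
  have concave : ConcaveOn ℝ (Set.Icc a b) fun x => cos (x * t / 2) ^ 2 :=
    (concaveOn_cos_mul_half_sq hbt).subset (Set.Icc_subset_Icc_left (abs_le.1 hb).1)
      (convex_Icc a b)
  have endpoint_le : cos (b * t / 2) ^ 2 ≤ cos (a * t / 2) ^ 2 := by
    refine cos_half_sq_le_of_abs_le ?_ (hbt.trans (half_le_self pi_nonneg))
    rw [abs_mul, abs_mul]
    exact mul_le_mul_of_nonneg_right (hb.trans (le_abs_self b)) (abs_nonneg t)
  exact chord_le_sum_mul_of_concaveOn concave hab endpoint_le hp hsum hE hmean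

/-- Convexity bound for one-bit phase estimation: for energies
`E 0 ≤ E 1 ≤ ⋯ ≤ E (N-1)` with `E 0 < E (N-1)` and `0 ≤ E j * t ≤ π/2`, probabilities
`p j` summing to `1`, and `⟨E⟩` with `∑ j, p j * E j ≤ ⟨E⟩`, the acceptance probability
`∑ j, p j * cos²(E j * t / 2)` is at least
`cos²(E₁ t / 2) (1 - x) + cos²(E_N t / 2) x` where `x = (⟨E⟩ - E₁)/(E_N - E₁)`. -/
theorem stmt3 (N : ℕ) (hN : 2 ≤ N) (t : ℝ) (ht : 0 < t)
    (E : Fin N → ℝ) (hmono : Monotone E)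
    (hlt : E ⟨0, by omega⟩ < E ⟨N - 1, by omega⟩)
    (hrange : ∀ j, 0 ≤ E j * t ∧ E j * t ≤ π / 2)
    (p : Fin N → ℝ) (hp : ∀ j, 0 ≤ p j) (hsum : ∑ j, p j = 1)
    (Eavg : ℝ) (hE : ∑ j, p j * E j ≤ Eavg) :
    cos (E ⟨0, by omega⟩ * t / 2) ^ 2 *
        (1 - (Eavg - E ⟨0, by omega⟩) / (E ⟨N - 1, by omega⟩ - E ⟨0, by omega⟩)) +
      cos (E ⟨N - 1, by omega⟩ * t / 2) ^ 2 *
        ((Eavg - E ⟨0, by omega⟩) / (E ⟨N - 1, by omega⟩ - E ⟨0, by omega⟩)) ≤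
      ∑ j, p j * cos (E j * t / 2) ^ 2 := by
  have hE₀ : 0 ≤ E ⟨0, by omega⟩ := nonneg_of_mul_nonneg_left (hrange _).1 ht
  exact stmt3_general hlt ((abs_of_nonneg hE₀).trans_le hlt.le)
    ((abs_of_nonneg (hrange _).1).trans_le (hrange _).2)
    (fun (j : Fin N) _ => ⟨hmono (Nat.zero_le j), hmono (Nat.le_sub_one_of_lt j.isLt)⟩)
    (fun j _ => hp j) hsum hE
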